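/- arXiv:2308.12702 — 4 statements merged into one kernel-verified Lean document; each statement's English description precedes it below -/
import Mathlib

section
/- Let n = 2^r − 1 for some r > 2 (so n is odd and n − 1 is even). There is no continuous C_2-equivariant map f : V_{n,n-1} → V_{n,n-1}, where the source carries the flip C_2-action and the target carries the antipodal C_2-action. (V_{n,n-1} is identified with SO(n).) -/
/-- The index flip on `Fin (2k)`: swaps `2i ↔ 2i + 1`. -/
def finFlip {k : ℕ} (i : Fin (2 * k)) : Fin (2 * k) :=
  ⟨if i.1 % 2 = 0 then i.1 + 1 else i.1 - 1, by
    rcases i with ⟨v, hv⟩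
    dsimp only
    split <;> omega⟩

lemma finFlip_involutive {k : ℕ} : Function.Involutive (finFlip (k := k)) := by
  intro i
  rcases i with ⟨v, hv⟩
  apply Fin.ext
  simp only [finFlip]
  split_ifs <;> omega

lemma finFlip_injective {k : ℕ} : Function.Injective (finFlip (k := k)) :=
  finFlip_involutive.injective

/-- The real Stiefel manifold `V_{n,m}` of orthonormal `m`-frames in `ℝⁿ`. -/
abbrev Stiefel (n m : ℕ) : Type :=
  { v : Fin m → EuclideanSpace ℝ (Fin n) // Orthonormal ℝ v }

/-- The flip involution on `V_{n,2k}`: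
`(v₁, v₂, …, v_{2k}) ↦ (v₂, v₁, …, v_{2k}, v_{2k-1})`. -/
def flipFrame {n k : ℕ} (v : Stiefel n (2 * k)) : Stiefel n (2 * k) :=
  ⟨v.1 ∘ finFlip, v.2.comp finFlip finFlip_injective⟩

/-- The antipodal involution on `V_{n,m}`: `(v₁, …, v_m) ↦ (−v₁, …, −v_m)`. -/
def negFrame {n m : ℕ} (v : Stiefel n m) : Stiefel n m :=
  ⟨fun i => -(v.1 i), by
    have h2 := v.2
    rw [orthonormal_iff_ite] at h2 ⊢
    intro i j
    simpa [inner_neg_neg] using h2 i j⟩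

/-!
Negation of frames on `V_{2m+1,2m} = SO(2m+1)` lifts to the spin double cover as right
multiplication by the product `t` of `2m` Clifford generators. For odd `m` one has `t² = -1`, so the
lift `T` has order four and `T²` is the deck transformation. A map `F` from the plane to
`V_{2m+1,2m}` lifts to a map `G` to the cover; if `F` were odd on the unit circle, then `G` would
satisfy `G(-x) = T^{±1} G(x)` there, with a constant sign, and applying this twice gives
`G(x) = T² G(x)`, which is absurd.

On the other side, let `x₁, …, x_k` be fixed orthonormal vectors and `b₁, …, b_k` orthonormal
vectors in a quaternionic space `ℍˡ` orthogonal to them. The vectors `(xᵢ ± q bᵢ)/√2` form a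
`2k`-frame for every unit quaternion `q`, and `q ↦ -q` flips it. As the three-sphere is simply
connected, the inclusion of the unit circle of `ℂ` into the unit quaternions extends to the plane.
Composing the resulting family of frames with an equivariant map produces an `F` as above.
-/

section DoubleCover

variable {E B : Type*} {p : E → B}

lemma involutive_of_fiber_eq_pair {σ : E → E}
    (hfree : ∀ e, σ e ≠ e) (hfiber : ∀ e e', p e = p e' ↔ e = e' ∨ e = σ e') :
    Function.Involutive σ := by
  intro e
  have hσσ : p (σ (σ e)) = p e :=
    ((hfiber _ _).mpr (Or.inr rfl)).trans ((hfiber _ _).mpr (Or.inr rfl))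
  exact ((hfiber _ _).mp hσσ).resolve_right (hfree (σ e))

variable [TopologicalSpace E] [CompactSpace E] [T2Space E] [TopologicalSpace B] [T2Space B]

lemma isCoveringMap_of_fiber_eq_pair {σ : E → E}
    (hp : Continuous p) (hsurj : Function.Surjective p) (hσ : Continuous σ)
    (hfree : ∀ e, σ e ≠ e) (hfiber : ∀ e e', p e = p e' ↔ e = e' ∨ e = σ e') :
    IsCoveringMap p := by
  have hinv := involutive_of_fiber_eq_pair hfree hfiber
  let _ : MulAction ℤˣ E :=
    { smul := fun u e => if u = 1 then e else σ e
      one_smul := fun _ => if_pos rfl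
      mul_smul := fun u w e => by
        rcases Int.units_eq_one_or u with rfl | rfl <;>
          rcases Int.units_eq_one_or w with rfl | rfl <;>
          first | rfl | exact (hinv e).symm }
  have : ContinuousConstSMul ℤˣ E := ⟨fun u => by
    rcases Int.units_eq_one_or u with rfl | rfl
    exacts [continuous_id, hσ]⟩
  have : IsCancelSMul ℤˣ E := isCancelSMul_iff_eq_one_of_smul_eq.mpr fun u e hu =>
    (Int.units_eq_one_or u).resolve_right (by rintro rfl; exact hfree e hu)
  have hquot : Topology.IsQuotientMap p := .of_surjective_continuous hsurj hp
  refine (hquot.isQuotientCoveringMap_of_properlyDiscontinuousSMul (G := ℤˣ) ?_).isCoveringMap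
  intro e e'
  rw [hfiber, MulAction.mem_orbit_iff]
  constructor
  · rintro (rfl | rfl)
    exacts [⟨1, one_smul _ _⟩, ⟨-1, rfl⟩]
  · rintro ⟨u, rfl⟩
    rcases Int.units_eq_one_or u with rfl | rfl
    exacts [Or.inl (one_smul _ _), Or.inr rfl]

lemma not_odd_on_sphere_of_double_cover
    {X : Type*} [NormedAddCommGroup X] [NormedSpace ℝ X] (hX : 1 < Module.rank ℝ X)
    {T : E → E} {τ : B → B} (hp : Continuous p) (hsurj : Function.Surjective p)
    (hT : Continuous T) (hTτ : ∀ e, p (T e) = τ (p e)) (hfree : ∀ e, T (T e) ≠ e)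
    (hfiber : ∀ e e', p e = p e' ↔ e = e' ∨ e = T (T e')) :
    ¬ ∃ F : X → B, Continuous F ∧ ∀ x, ‖x‖ = 1 → F (-x) = τ (F x) := by
  rintro ⟨F, hF, hodd⟩
  have hcov : IsCoveringMap p :=
    isCoveringMap_of_fiber_eq_pair hp hsurj (hT.comp hT) hfree hfiber
  have hinv : Function.Involutive (T ∘ T) := involutive_of_fiber_eq_pair hfree hfiber
  have : Nontrivial X := rank_pos_iff_nontrivial.mp (zero_lt_one.trans hX)
  obtain ⟨e₀, he₀⟩ := hsurj (F 0)
  obtain ⟨G, ⟨-, hG⟩, -⟩ := hcov.existsUnique_continuousMap_lifts ⟨F, hF⟩ 0 e₀ he₀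
  have hpG (x : X) : p (G x) = F x := congrFun hG x
  have : PreconnectedSpace (Metric.sphere (0 : X) 1) :=
    Subtype.preconnectedSpace (isPreconnected_sphere hX 0 1)
  obtain ⟨s₀⟩ : Nonempty (Metric.sphere (0 : X) 1) :=
    (NormedSpace.sphere_nonempty.mpr zero_le_one).to_subtype
  have hpodd (s : Metric.sphere (0 : X) 1) : p (G (-s)) = τ (p (G s)) := by
    rw [hpG, hpG, hodd _ (norm_eq_of_mem_sphere s)]
  have lift_ne (R : E → E) (hR : Continuous R) (hRτ : ∀ e, p (R e) = τ (p e))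
      (hRR : ∀ e, R (R e) = T (T e)) : G (-s₀) ≠ R (G s₀) := by
    intro h₀
    have hall : (fun s : Metric.sphere (0 : X) 1 => G (-s)) =
        fun s : Metric.sphere (0 : X) 1 => R (G ↑s) :=
      hcov.eq_of_comp_eq (by fun_prop) (by fun_prop)
        (funext fun s => (hpodd s).trans (hRτ _).symm) s₀ h₀
    have h₁ : G s₀ = R (G (-s₀)) := by simpa using congrFun hall (-s₀)
    exact hfree (G s₀) (by rw [← hRR, ← h₀, ← h₁])
  rcases (hfiber _ _).mp ((hpodd s₀).trans (hTτ _).symm) with h | h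
  · exact lift_ne T hT hTτ (fun _ => rfl) h
  · refine lift_ne (fun e => T (T (T e))) (by fun_prop) (fun e => ?_) (fun e => ?_) h
    · rw [(hfiber _ _).mpr (Or.inr rfl), hTτ]
    · exact hinv (T (T e))

end DoubleCover

section Compact

variable {𝕜 : Type*} [RCLike 𝕜]

instance compactSpace_unitaryGroup {ι : Type*} [Fintype ι] [DecidableEq ι] :
    CompactSpace (Matrix.unitaryGroup ι 𝕜) := by
  refine isCompact_iff_compactSpace.mp (IsCompact.of_isClosed_subset
    (isCompact_univ_pi fun _ => isCompact_univ_pi fun _ => isCompact_closedBall (0 : 𝕜) 1)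
    isClosed_unitary fun a ha i _ j _ => ?_)
  simpa using entry_norm_bound_of_unitary ha i j

instance compactSpace_orthonormal {F ι : Type*} [NormedAddCommGroup F] [InnerProductSpace 𝕜 F]
    [FiniteDimensional 𝕜 F] : CompactSpace {v : ι → F // Orthonormal 𝕜 v} := by
  classical
  have := FiniteDimensional.proper_rclike 𝕜 F
  have hclosed : IsClosed {v : ι → F | Orthonormal 𝕜 v} := by
    simp only [orthonormal_iff_ite, Set.ofPred_forall]
    exact isClosed_iInter fun i => isClosed_iInter fun j => isClosed_eq (by fun_prop) (by fun_prop)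
  refine isCompact_iff_compactSpace.mp (IsCompact.of_isClosed_subset
    (isCompact_univ_pi fun _ => isCompact_closedBall (0 : F) 1) hclosed fun v hv i _ => ?_)
  simpa using (hv.1 i).le

end Compact

section Anticommuting

variable {R : Type*} [Ring R]

lemma semiconjBy_neg_comm {x y : R} : SemiconjBy x y (-y) ↔ SemiconjBy y x (-x) := by
  rw [SemiconjBy, SemiconjBy, neg_mul, neg_mul, eq_neg_iff_add_eq_zero, eq_neg_iff_add_eq_zero,
    add_comm]

lemma semiconjBy_list_prod_of_anticommute {l : List R} {x : R}
    (h : ∀ y ∈ l, SemiconjBy y x (-x)) : SemiconjBy l.prod x ((-1) ^ l.length * x) := by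
  induction l with
  | nil => simp
  | cons y l ih =>
    have hl := ih fun z hz => h z (List.mem_cons_of_mem y hz)
    have hy : SemiconjBy y ((-1) ^ l.length * x) ((-1) ^ l.length * -x) :=
      ((SemiconjBy.neg_one_right y).pow_right _).mul_right (h y List.mem_cons_self)
    simpa [pow_succ] using hy.mul_left hl

lemma semiconjBy_list_prod_of_mem {l : List R} (hl : l.Pairwise fun x y => SemiconjBy x y (-y))
    {x : R} (hx : x ∈ l) : SemiconjBy l.prod x ((-1) ^ (l.length + 1) * x) := by
  induction l with
  | nil => simp at hx
  | cons y l ih =>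
    obtain ⟨hy, hl⟩ := List.pairwise_cons.mp hl
    rcases List.mem_cons.mp hx with rfl | hx
    · have hprod : SemiconjBy l.prod x ((-1) ^ l.length * x) :=
        semiconjBy_list_prod_of_anticommute fun z hz => semiconjBy_neg_comm.mp (hy z hz)
      have hself : SemiconjBy x ((-1) ^ l.length * x) ((-1) ^ l.length * x) :=
        ((SemiconjBy.neg_one_right x).pow_right _).mul_right rfl
      simpa [pow_succ] using hself.mul_left hprod
    · have hyx : SemiconjBy y ((-1) ^ (l.length + 1) * x) ((-1) ^ (l.length + 1) * -x) :=
        ((SemiconjBy.neg_one_right y).pow_right _).mul_right (hy x hx)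
      simpa [pow_succ] using hyx.mul_left (ih hl hx)

lemma list_prod_mul_self_of_anticommute {l : List R}
    (hl : l.Pairwise fun x y => SemiconjBy x y (-y)) (hsq : ∀ x ∈ l, x * x = 1) :
    l.prod * l.prod = (-1) ^ l.length.choose 2 := by
  induction l with
  | nil => simp
  | cons y l ih =>
    obtain ⟨hy, hl⟩ := List.pairwise_cons.mp hl
    have hprod : SemiconjBy l.prod y ((-1) ^ l.length * y) :=
      semiconjBy_list_prod_of_anticommute fun z hz => semiconjBy_neg_comm.mp (hy z hz)
    have hcomm : y * (-1) ^ l.length = (-1) ^ l.length * y :=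
      ((SemiconjBy.neg_one_right y).pow_right _).eq
    calc (y :: l).prod * (y :: l).prod = y * (l.prod * y) * l.prod := by
          simp only [List.prod_cons, mul_assoc]
      _ = (-1) ^ l.length * (y * y) * (l.prod * l.prod) := by
          rw [hprod.eq, ← mul_assoc y, ← mul_assoc y, hcomm]; simp only [mul_assoc]
      _ = (-1) ^ (y :: l).length.choose 2 := by
          rw [hsq y List.mem_cons_self, ih hl fun z hz => hsq z (List.mem_cons_of_mem y hz),
            List.length_cons, Nat.choose_succ_succ' _ 1, Nat.choose_one_right, pow_add, mul_one]

end Anticommuting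

section SpinCover

open Matrix

/-- A real matrix model of the Clifford algebra of `ℝ^(N+1)`: symmetric anticommuting square roots
`gen i` of `1`. The matrices `aux j` anticommute with all generators, so the even Clifford algebra
commutes with them; they are chosen so that the common centralizer of the `aux j` and the first `N`
generators consists of scalars only, which makes spin lifts unique up to sign. -/
structure SpinModule (N : ℕ) (ι : Type*) [Fintype ι] [DecidableEq ι] where
  gen : Fin (N + 1) → Matrix ι ι ℝ
  aux : Fin (N + 2) → Matrix ι ι ℝ
  gen_mul_self : ∀ i, gen i * gen i = 1
  gen_anticommute : ∀ i j, i ≠ j → SemiconjBy (gen i) (gen j) (-gen j)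
  gen_isSymm : ∀ i, (gen i).IsSymm
  gen_aux_anticommute : ∀ i j, SemiconjBy (gen i) (aux j) (-aux j)
  exists_eq_smul_one_of_commute : ∀ c : Matrix ι ι ℝ, (∀ j, Commute c (aux j)) →
    (∀ i : Fin N, Commute c (gen i.castSucc)) → ∃ x : ℝ, c = x • (1 : Matrix ι ι ℝ)

lemma exists_eq_fromBlocks_of_commute {R ι : Type*} [Ring R] [IsAddTorsionFree R]
    [Fintype ι] [DecidableEq ι] {c : Matrix (ι ⊕ ι) (ι ⊕ ι) R}
    (hswap : Commute c (fromBlocks 0 1 1 0))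
    (hturn : Commute c (fromBlocks 0 1 (-1) 0)) : ∃ p, c = fromBlocks p 0 0 p := by
  obtain ⟨p, q, r, s, rfl⟩ : ∃ p q r s, c = fromBlocks p q r s :=
    ⟨_, _, _, _, (fromBlocks_toBlocks c).symm⟩
  simp only [Commute, SemiconjBy, fromBlocks_multiply, fromBlocks_inj, mul_zero, mul_one, zero_mul,
    one_mul, zero_add, add_zero, mul_neg, neg_mul] at hswap hturn
  obtain ⟨hqr, hps, -, -⟩ := hswap
  obtain ⟨hnqr, -, -, -⟩ := hturn
  have : IsAddTorsionFree (Matrix ι ι R) := inferInstanceAs (IsAddTorsionFree (ι → ι → R))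
  obtain rfl : q = 0 := self_eq_neg.mp (hqr.trans hnqr.symm)
  exact ⟨p, by rw [← hqr, ← hps]⟩

namespace SpinModule

/-- The two-dimensional model with a single generator. -/
def base : SpinModule 0 (Fin 2) where
  gen _ := !![0, 1; 1, 0]
  aux := ![!![1, 0; 0, -1], !![0, 1; -1, 0]]
  gen_mul_self _ := by simp [one_fin_two]
  gen_anticommute i j hij := absurd (Subsingleton.elim (α := Fin 1) i j) hij
  gen_isSymm _ := by ext a b; fin_cases a <;> fin_cases b <;> rfl
  gen_aux_anticommute _ j := by fin_cases j <;> simp [SemiconjBy]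
  exists_eq_smul_one_of_commute c hc _ := by
    have h₀₁ : c 0 1 = 0 := by
      simpa [mul_apply, neg_eq_self] using congrFun₂ (hc 0).eq 0 1
    have h₁₀ : c 1 0 = 0 := by
      simpa [mul_apply, self_eq_neg] using congrFun₂ (hc 0).eq 1 0
    have hdiag : c 0 0 = c 1 1 := by
      simpa [mul_apply] using congrFun₂ (hc 1).eq 0 1
    exact ⟨c 0 0, by rw [eta_fin_two c, one_fin_two]; simp [h₀₁, h₁₀, hdiag]⟩

/-- The doubled model with one more generator, which swaps the two summands. The old generators
act with opposite signs on the summands, and the new auxiliary matrix is a quarter turn. -/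
def step {N : ℕ} {ι : Type*} [Fintype ι] [DecidableEq ι] (D : SpinModule N ι) :
    SpinModule (N + 1) (ι ⊕ ι) where
  gen := Fin.cons (fromBlocks 0 1 1 0) fun i => fromBlocks (D.gen i) 0 0 (-D.gen i)
  aux := Fin.cons (fromBlocks 0 1 (-1) 0) fun j => fromBlocks (D.aux j) 0 0 (-D.aux j)
  gen_mul_self i := by
    cases i using Fin.cases <;> simp [fromBlocks_multiply, D.gen_mul_self]
  gen_anticommute i j hij := by
    cases i using Fin.cases <;> cases j using Fin.cases
    · exact absurd rfl hij
    · simp [SemiconjBy, fromBlocks_multiply, fromBlocks_neg]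
    · simp [SemiconjBy, fromBlocks_multiply, fromBlocks_neg]
    · simp [SemiconjBy, fromBlocks_multiply, fromBlocks_neg,
        (D.gen_anticommute _ _ fun h => hij (congrArg Fin.succ h)).eq]
  gen_isSymm i := by
    cases i using Fin.cases <;> simp [IsSymm, fromBlocks_transpose, (D.gen_isSymm _).eq]
  gen_aux_anticommute i j := by
    cases i using Fin.cases <;> cases j using Fin.cases <;>
      simp [SemiconjBy, fromBlocks_multiply, fromBlocks_neg, (D.gen_aux_anticommute _ _).eq]
  exists_eq_smul_one_of_commute c haux hgen := by
    obtain ⟨p, rfl⟩ := exists_eq_fromBlocks_of_commute (hgen 0) (haux 0)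
    have haux' (j) : Commute p (D.aux j) := by
      simpa [Commute, SemiconjBy, fromBlocks_multiply] using haux j.succ
    have hgen' (i : Fin N) : Commute p (D.gen i.castSucc) := by
      simpa [Commute, SemiconjBy, fromBlocks_multiply, Fin.castSucc_succ] using hgen i.succ
    obtain ⟨x, rfl⟩ := D.exists_eq_smul_one_of_commute p haux' hgen'
    exact ⟨x, by simp [← fromBlocks_one, fromBlocks_smul]⟩

end SpinModule

lemma exists_spinModule (N : ℕ) : ∃ (ι : Type) (_ : Fintype ι) (_ : DecidableEq ι),
    Nonempty ι ∧ Nonempty (SpinModule N ι) := by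
  induction N with
  | zero => exact ⟨Fin 2, inferInstance, inferInstance, inferInstance, ⟨SpinModule.base⟩⟩
  | succ N ih =>
    obtain ⟨ι, _, _, _, ⟨D⟩⟩ := ih
    exact ⟨ι ⊕ ι, inferInstance, inferInstance, inferInstance, ⟨D.step⟩⟩

lemma exists_orthonormalBasis_castSucc_eq {𝕜 F : Type*} [RCLike 𝕜] [NormedAddCommGroup F]
    [InnerProductSpace 𝕜 F] {N : ℕ} (hF : Module.finrank 𝕜 F = N + 1) {v : Fin N → F}
    (hv : Orthonormal 𝕜 v) : ∃ b : OrthonormalBasis (Fin (N + 1)) 𝕜 F, ∀ i, b i.castSucc = v i := by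
  have := Module.finite_of_finrank_eq_succ hF
  let f : Fin (N + 1) → F := Fin.snoc v 0
  have hf (i : Fin N) : f i.castSucc = v i := Fin.snoc_castSucc ..
  have horth : Pairwise fun i j => inner 𝕜 (f i) (f j) = 0 := by
    intro i j hij
    cases i using Fin.lastCases with
    | last => simp [f]
    | cast i =>
      cases j using Fin.lastCases with
      | last => simp [f]
      | cast j => simpa [hf] using hv.2 fun h => hij (congrArg _ h)
  refine ⟨InnerProductSpace.gramSchmidtOrthonormalBasis (by simpa using hF) f, fun i => ?_⟩
  rw [InnerProductSpace.gramSchmidtOrthonormalBasis_apply_of_orthogonal _ horth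
    (by simpa [hf] using hv.ne_zero i), hf, hv.1]
  simp

namespace SpinModule

variable {N : ℕ} {ι : Type*} [Fintype ι] [DecidableEq ι] (D : SpinModule N ι)

/-- Clifford multiplication by vectors, the linear extension of `eᵢ ↦ gen i`. -/
noncomputable def clifford : EuclideanSpace ℝ (Fin (N + 1)) →ₗ[ℝ] Matrix ι ι ℝ :=
  Fintype.linearCombination ℝ D.gen ∘ₗ (WithLp.linearEquiv 2 ℝ (Fin (N + 1) → ℝ)).toLinearMap

lemma clifford_apply (v : EuclideanSpace ℝ (Fin (N + 1))) :
    D.clifford v = ∑ i, v i • D.gen i :=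
  rfl

lemma clifford_single (i : Fin (N + 1)) : D.clifford (EuclideanSpace.single i 1) = D.gen i := by
  simp [clifford_apply]

lemma isSymm_clifford (v : EuclideanSpace ℝ (Fin (N + 1))) : (D.clifford v).IsSymm := by
  simp [IsSymm, clifford_apply, transpose_sum, (D.gen_isSymm _).eq]

lemma continuous_clifford : Continuous D.clifford :=
  D.clifford.continuous_of_finiteDimensional

lemma clifford_aux_anticommute (v : EuclideanSpace ℝ (Fin (N + 1))) (j : Fin (N + 2)) :
    SemiconjBy (D.clifford v) (D.aux j) (-D.aux j) := by
  simp [SemiconjBy, clifford_apply, Finset.sum_mul, Finset.mul_sum, (D.gen_aux_anticommute _ j).eq]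

lemma gen_mul_gen_add (i j : Fin (N + 1)) :
    D.gen i * D.gen j + D.gen j * D.gen i = if i = j then (2 : ℝ) • 1 else 0 := by
  split_ifs with hij
  · rw [hij, D.gen_mul_self, two_smul]
  · rw [(D.gen_anticommute i j hij).eq, neg_mul, neg_add_cancel]

lemma clifford_mul_add (v w : EuclideanSpace ℝ (Fin (N + 1))) :
    D.clifford v * D.clifford w + D.clifford w * D.clifford v = (2 * inner ℝ v w) • 1 := by
  calc D.clifford v * D.clifford w + D.clifford w * D.clifford v
      = ∑ i, ∑ j, (v i * w j) • (D.gen i * D.gen j + D.gen j * D.gen i) := by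
        simp only [clifford_apply, Finset.sum_mul_sum, smul_mul_smul_comm, smul_add,
          Finset.sum_add_distrib]
        rw [Finset.sum_comm (f := fun i j => (w i * v j) • (D.gen i * D.gen j))]
        simp only [mul_comm (w _)]
    _ = (2 * inner ℝ v w) • 1 := by
        simp [gen_mul_gen_add, PiLp.inner_apply, Finset.mul_sum, Finset.sum_smul, smul_smul,
          mul_comm]

lemma clifford_mul_self {v : EuclideanSpace ℝ (Fin (N + 1))} (hv : ‖v‖ = 1) :
    D.clifford v * D.clifford v = 1 := by
  have h : (2 : ℝ) • (D.clifford v * D.clifford v) = (2 : ℝ) • 1 := by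
    simpa [two_smul, hv] using D.clifford_mul_add v v
  exact smul_right_injective _ two_ne_zero h

lemma clifford_mem_orthogonalGroup {v : EuclideanSpace ℝ (Fin (N + 1))} (hv : ‖v‖ = 1) :
    D.clifford v ∈ orthogonalGroup ι ℝ := by
  rw [mem_orthogonalGroup_iff, (D.isSymm_clifford v).eq, D.clifford_mul_self hv]

/-- `a` covers the isometry `φ` in the pin group: conjugation by `a` sends Clifford multiplication
by `v` to that by `φ v`, up to the sign `s` (which is `-1` on a hyperplane reflection, hence equals
`det φ`). The same sign governs `aux`, so that even elements commute with it. -/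
structure IsPinLift (a : orthogonalGroup ι ℝ)
    (φ : EuclideanSpace ℝ (Fin (N + 1)) ≃ₗᵢ[ℝ] EuclideanSpace ℝ (Fin (N + 1))) (s : ℤˣ) :
    Prop where
  semiconjBy_aux : ∀ j, SemiconjBy (a : Matrix ι ι ℝ) (D.aux j) (s • D.aux j)
  semiconjBy_clifford : ∀ v,
    SemiconjBy (a : Matrix ι ι ℝ) (D.clifford v) (s • D.clifford (φ v))

variable {D}

lemma isPinLift_one : D.IsPinLift 1 1 1 := ⟨by simp, by simp⟩

lemma IsPinLift.mul {a b : orthogonalGroup ι ℝ} {s t : ℤˣ}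
    {φ ψ : EuclideanSpace ℝ (Fin (N + 1)) ≃ₗᵢ[ℝ] EuclideanSpace ℝ (Fin (N + 1))}
    (ha : D.IsPinLift a φ s) (hb : D.IsPinLift b ψ t) : D.IsPinLift (a * b) (φ * ψ) (s * t) where
  semiconjBy_aux j := by
    rw [mul_comm, mul_smul]
    exact ((ha.semiconjBy_aux j).smul_right t).mul_left (hb.semiconjBy_aux j)
  semiconjBy_clifford v := by
    rw [mul_comm s, mul_smul]
    exact ((ha.semiconjBy_clifford (ψ v)).smul_right t).mul_left (hb.semiconjBy_clifford v)

variable (D)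

lemma isPinLift_reflection {u : EuclideanSpace ℝ (Fin (N + 1))} (hu : ‖u‖ = 1) :
    D.IsPinLift ⟨D.clifford u, D.clifford_mem_orthogonalGroup hu⟩
      (Submodule.span ℝ {u})ᗮ.reflection (-1) where
  semiconjBy_aux j := by simpa using D.clifford_aux_anticommute u j
  semiconjBy_clifford v := by
    have hsq := D.clifford_mul_self hu
    have hanti := eq_sub_of_add_eq (D.clifford_mul_add u v)
    rw [Submodule.reflection_orthogonal_apply, Submodule.reflection_singleton_apply, hu]
    calc D.clifford u * D.clifford v
        = (2 * inner ℝ u v) • (D.clifford u * D.clifford u) - D.clifford v * D.clifford u := by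
          rw [hanti, hsq]
      _ = _ := by simp [sub_mul, two_smul, two_mul, add_mul, add_smul]

lemma exists_isPinLift
    (φ : EuclideanSpace ℝ (Fin (N + 1)) ≃ₗᵢ[ℝ] EuclideanSpace ℝ (Fin (N + 1))) :
    ∃ a s, D.IsPinLift a φ s := by
  obtain ⟨l, -, rfl⟩ := φ.reflections_generate_dim
  induction l with
  | nil => exact ⟨1, 1, isPinLift_one⟩
  | cons u l ih =>
    obtain ⟨a, s, ha⟩ := ih
    rw [List.map_cons, List.prod_cons]
    rcases eq_or_ne u 0 with rfl | hu
    · have hone : (Submodule.span ℝ {(0 : EuclideanSpace ℝ (Fin (N + 1)))})ᗮ.reflection = 1 :=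
        LinearIsometryEquiv.ext fun v => by
          rw [Submodule.reflection_orthogonal_apply, Submodule.reflection_singleton_apply]
          simp
      exact ⟨a, s, by rwa [hone, one_mul]⟩
    · have hspan : Submodule.span ℝ {u} = Submodule.span ℝ {(‖u‖⁻¹ : ℝ) • u} :=
        (Submodule.span_singleton_smul_eq (IsUnit.mk0 _ (by simpa using hu)) u).symm
      have hlift := D.isPinLift_reflection (norm_smul_inv_norm (𝕜 := ℝ) hu)
      simp only [RCLike.ofReal_real_eq_id, id, ← hspan] at hlift
      exact ⟨_, _, hlift.mul ha⟩

/-- The spin double cover of `V_{N+1,N}`: a frame together with an even orthogonal matrix carrying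
the first `N` generators to Clifford multiplication by the frame vectors. -/
def spinCover : Set (orthogonalGroup ι ℝ × Stiefel (N + 1) N) :=
  {p | (∀ j, Commute (p.1 : Matrix ι ι ℝ) (D.aux j)) ∧
    ∀ i : Fin N, SemiconjBy (p.1 : Matrix ι ι ℝ) (D.gen i.castSucc) (D.clifford (p.2.1 i))}

lemma IsPinLift.mem_spinCover {D : SpinModule N ι} {a : orthogonalGroup ι ℝ}
    {φ : EuclideanSpace ℝ (Fin (N + 1)) ≃ₗᵢ[ℝ] EuclideanSpace ℝ (Fin (N + 1))}
    (ha : D.IsPinLift a φ 1) {v : Stiefel (N + 1) N}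
    (hφ : ∀ i : Fin N, φ (EuclideanSpace.single i.castSucc 1) = v.1 i) :
    (a, v) ∈ D.spinCover := by
  refine ⟨fun j => by simpa [Commute] using ha.semiconjBy_aux j, fun i => ?_⟩
  simpa [clifford_single, hφ] using ha.semiconjBy_clifford (EuclideanSpace.single i.castSucc 1)

lemma exists_mem_spinCover (v : Stiefel (N + 1) N) : ∃ a, (a, v) ∈ D.spinCover := by
  obtain ⟨b, hb⟩ := exists_orthonormalBasis_castSucc_eq (by simp) v.2
  have hφ (i : Fin N) : b.repr.symm (EuclideanSpace.single i.castSucc 1) = v.1 i := by simp [hb]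
  obtain ⟨a, s, ha⟩ := D.exists_isPinLift b.repr.symm
  rcases Int.units_eq_one_or s with rfl | rfl
  · exact ⟨a, ha.mem_spinCover hφ⟩
  · let last : EuclideanSpace ℝ (Fin (N + 1)) := EuclideanSpace.single (Fin.last N) 1
    have hlast (i : Fin N) : (Submodule.span ℝ {last})ᗮ.reflection
        (EuclideanSpace.single i.castSucc 1) = EuclideanSpace.single i.castSucc 1 := by
      refine Submodule.reflection_mem_subspace_eq_self ?_
      simp [Submodule.mem_orthogonal_singleton_iff_inner_right, last,
        EuclideanSpace.inner_single_left, (Fin.castSucc_lt_last i).ne']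
    have hrefl := ha.mul (D.isPinLift_reflection (u := last) (by simp [last]))
    exact ⟨_, hrefl.mem_spinCover fun i => (congrArg b.repr.symm (hlast i)).trans (hφ i)⟩

instance compactSpace_spinCover : CompactSpace D.spinCover := by
  have hclifford := D.continuous_clifford
  have hframe (i : Fin N) :
      Continuous fun e : orthogonalGroup ι ℝ × Stiefel (N + 1) N => e.2.1 i :=
    (continuous_apply i).comp (continuous_subtype_val.comp continuous_snd)
  refine isCompact_iff_compactSpace.mp (IsClosed.isCompact ?_)
  simp only [spinCover, Commute, SemiconjBy, Set.ofPred_and, Set.ofPred_forall]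
  exact (isClosed_iInter fun j => isClosed_eq (by fun_prop) (by fun_prop)).inter
    (isClosed_iInter fun i =>
      isClosed_eq (by fun_prop) ((hclifford.comp (hframe i)).mul (by fun_prop)))

variable {D}

lemma eq_or_eq_neg_of_mem_spinCover [Nonempty ι] {a b : orthogonalGroup ι ℝ}
    {v : Stiefel (N + 1) N} (ha : (a, v) ∈ D.spinCover) (hb : (b, v) ∈ D.spinCover) :
    a = b ∨ a = -b := by
  have inv_semiconjBy {x y : Matrix ι ι ℝ} (h : SemiconjBy (b : Matrix ι ι ℝ) x y) :
      SemiconjBy ((b⁻¹ : orthogonalGroup ι ℝ) : Matrix ι ι ℝ) y x :=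
    h.units_inv_symm_left (a := Unitary.toUnits b)
  obtain ⟨x, hx⟩ := D.exists_eq_smul_one_of_commute ((b⁻¹ * a : orthogonalGroup ι ℝ))
    (fun j => (inv_semiconjBy (hb.1 j)).mul_left (ha.1 j))
    (fun i => (inv_semiconjBy (hb.2 i)).mul_left (ha.2 i))
  have hxx : x * x = 1 := by
    have := (mem_orthogonalGroup_iff ι ℝ).mp (b⁻¹ * a).2
    obtain ⟨i⟩ := ‹Nonempty ι›
    simpa [hx, smul_smul] using congrFun₂ this i i
  have hab : (a : Matrix ι ι ℝ) = x • (b : Matrix ι ι ℝ) := by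
    calc (a : Matrix ι ι ℝ) = b * (b⁻¹ * a : orthogonalGroup ι ℝ) := by
          rw [← Submonoid.coe_mul, mul_inv_cancel_left]
      _ = _ := by rw [hx]; simp
  exact (mul_self_eq_one_iff.mp hxx).imp (fun h => Subtype.ext (by simp [hab, h]))
    (fun h => Subtype.ext (by simp [hab, h, Unitary.coe_neg]))

lemma exists_lift_negFrame {k : ℕ} (hk : Odd k) (D : SpinModule (2 * k) ι) :
    ∃ t : orthogonalGroup ι ℝ, t * t = -1 ∧ (∀ j, Commute (t : Matrix ι ι ℝ) (D.aux j)) ∧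
      ∀ i : Fin (2 * k), SemiconjBy (t : Matrix ι ι ℝ) (D.gen i.castSucc) (-D.gen i.castSucc) := by
  let l := List.ofFn fun i : Fin (2 * k) => D.gen i.castSucc
  have hlength : l.length = 2 * k := List.length_ofFn
  have forall_mem {P : Matrix ι ι ℝ → Prop} (h : ∀ i, P (D.gen i)) : ∀ x ∈ l, P x := by
    simp [l, h]
  have hl : l.Pairwise fun x y => SemiconjBy x y (-y) :=
    List.pairwise_ofFn.mpr fun i j hij =>
      D.gen_anticommute _ _ ((Fin.castSucc_injective _).ne hij.ne)
  have hmem : l.prod ∈ orthogonalGroup ι ℝ := Submonoid.list_prod_mem _ <| forall_mem fun i => by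
    rw [← D.clifford_single]; exact D.clifford_mem_orthogonalGroup (by simp)
  have hchoose : (2 * k).choose 2 = k * (2 * k - 1) := by
    rw [Nat.choose_two_right, mul_assoc, Nat.mul_div_cancel_left _ two_pos]
  have hodd : Odd ((2 * k).choose 2) := by
    have := hk.pos
    rw [hchoose]; exact hk.mul ⟨k - 1, by omega⟩
  refine ⟨⟨l.prod, hmem⟩, Subtype.ext ?_, fun j => ?_, fun i => ?_⟩
  · simpa [hlength, hodd.neg_one_pow, Unitary.coe_neg] using
      list_prod_mul_self_of_anticommute hl (forall_mem D.gen_mul_self)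
  · simpa [hlength, Commute] using
      semiconjBy_list_prod_of_anticommute (forall_mem fun i => D.gen_aux_anticommute i j)
  · simpa [hlength, pow_succ] using
      semiconjBy_list_prod_of_mem hl (List.mem_ofFn.mpr ⟨i, rfl⟩)

lemma mul_negFrame_mem_spinCover {a t : orthogonalGroup ι ℝ} {v : Stiefel (N + 1) N}
    (ha : (a, v) ∈ D.spinCover) (htaux : ∀ j, Commute (t : Matrix ι ι ℝ) (D.aux j))
    (htgen : ∀ i : Fin N,
      SemiconjBy (t : Matrix ι ι ℝ) (D.gen i.castSucc) (-D.gen i.castSucc)) :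
    (a * t, negFrame v) ∈ D.spinCover := by
  refine ⟨fun j => (ha.1 j).mul_left (htaux j), fun i => ?_⟩
  simpa [negFrame] using (ha.2 i).neg_right.mul_left (htgen i)

end SpinModule

lemma orthogonalGroup_neg_ne_self {ι : Type*} [Fintype ι] [DecidableEq ι] [Nonempty ι]
    (a : orthogonalGroup ι ℝ) : -a ≠ a := by
  have : IsAddTorsionFree (Matrix ι ι ℝ) := inferInstanceAs (IsAddTorsionFree (ι → ι → ℝ))
  exact fun h => (Unitary.isUnit_coe (U := a)).ne_zero (neg_eq_self.mp (congrArg Subtype.val h))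

lemma negFrame_negFrame {n m : ℕ} (v : Stiefel n m) : negFrame (negFrame v) = v :=
  Subtype.ext (funext fun i => neg_neg (v.1 i))

lemma continuous_negFrame {n m : ℕ} : Continuous (negFrame (n := n) (m := m)) :=
  continuous_subtype_val.neg.subtype_mk _

lemma not_odd_on_sphere_stiefel {X : Type*} [NormedAddCommGroup X] [NormedSpace ℝ X]
    (hX : 1 < Module.rank ℝ X) {m : ℕ} (hm : Odd m) :
    ¬ ∃ F : X → Stiefel (2 * m + 1) (2 * m),
      Continuous F ∧ ∀ x, ‖x‖ = 1 → F (-x) = negFrame (F x) := by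
  obtain ⟨ι, _, _, _, ⟨D⟩⟩ := exists_spinModule (2 * m)
  obtain ⟨t, htt, htaux, htgen⟩ := D.exists_lift_negFrame hm
  let T (e : D.spinCover) : D.spinCover :=
    ⟨(e.1.1 * t, negFrame e.1.2), D.mul_negFrame_mem_spinCover e.2 htaux htgen⟩
  have hTT (e : D.spinCover) : (T (T e)).1 = (-e.1.1, e.1.2) :=
    Prod.ext (by simp [T, mul_assoc, htt]) (negFrame_negFrame _)
  have hT : Continuous T :=
    ((continuous_subtype_val.fst.mul continuous_const).prodMk
      (continuous_negFrame.comp continuous_subtype_val.snd)).subtype_mk _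
  refine not_odd_on_sphere_of_double_cover hX (p := fun e : D.spinCover => e.1.2) (T := T)
    (τ := negFrame) continuous_subtype_val.snd ?_ hT (fun e => rfl) ?_ ?_
  · intro v
    obtain ⟨a, ha⟩ := D.exists_mem_spinCover v
    exact ⟨⟨(a, v), ha⟩, rfl⟩
  · exact fun e he => orthogonalGroup_neg_ne_self e.1.1
      (congrArg Prod.fst ((hTT e).symm.trans (congrArg Subtype.val he)))
  · intro e e'
    constructor
    · intro (h : e.1.2 = e'.1.2)
      have he' : (e'.1.1, e.1.2) ∈ D.spinCover := h ▸ e'.2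
      exact (SpinModule.eq_or_eq_neg_of_mem_spinCover e.2 he').imp
        (fun ha => Subtype.ext (Prod.ext ha h))
        (fun ha => Subtype.ext (hTT e' ▸ Prod.ext ha h))
    · rintro (rfl | rfl)
      exacts [rfl, negFrame_negFrame _]

end SpinCover

section SumDiffFrame

/-- The index `j` of the pair `{2j, 2j + 1}`, swapped by `finFlip`, which contains `i`. -/
def pairIndex {k : ℕ} (i : Fin (2 * k)) : Fin k :=
  ⟨i / 2, by omega⟩

/-- The sign distinguishing the two members of a pair swapped by `finFlip`. -/
def paritySign {k : ℕ} (i : Fin (2 * k)) : ℝ :=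
  (-1) ^ (i : ℕ)

lemma pairIndex_finFlip {k : ℕ} (i : Fin (2 * k)) : pairIndex (finFlip i) = pairIndex i := by
  ext
  simp only [pairIndex, finFlip]
  split_ifs <;> omega

lemma paritySign_finFlip {k : ℕ} (i : Fin (2 * k)) : paritySign (finFlip i) = -paritySign i := by
  rcases Nat.even_or_odd i with h | h
  · simp [paritySign, finFlip, Nat.even_iff.mp h, pow_succ]
  · simp [paritySign, finFlip, Nat.odd_iff.mp h, h.neg_one_pow,
      (Nat.Odd.sub_odd h odd_one).neg_one_pow]

lemma ite_pairIndex_mul_one_add_paritySign_mul {k : ℕ} (i j : Fin (2 * k)) :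
    (if pairIndex i = pairIndex j then (1 : ℝ) else 0) * (1 + paritySign i * paritySign j) =
      2 * if i = j then 1 else 0 := by
  rcases eq_or_ne i j with rfl | hij
  · rw [if_pos rfl, if_pos rfl, paritySign, ← mul_pow]
    norm_num
  · by_cases hp : pairIndex i = pairIndex j
    · have hodd : Odd (i + j : ℕ) := by
        simp only [pairIndex, ne_eq, Fin.ext_iff] at hp hij
        grind
      simp [hij, paritySign, ← pow_add, hodd.neg_one_pow]
    · simp [hij, hp]

variable {F : Type*} [NormedAddCommGroup F] [InnerProductSpace ℝ F] {k : ℕ}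

/-- The frame `(x₁ + y₁, x₁ - y₁, x₂ + y₂, x₂ - y₂, …)/√2`. -/
noncomputable def sumDiffFrame (x y : Fin k → F) (i : Fin (2 * k)) : F :=
  (√2)⁻¹ • (x (pairIndex i) + paritySign i • y (pairIndex i))

lemma orthonormal_sumDiffFrame {x y : Fin k → F} (hx : Orthonormal ℝ x) (hy : Orthonormal ℝ y)
    (hxy : ∀ i j, inner ℝ (x i) (y j) = 0) : Orthonormal ℝ (sumDiffFrame x y) := by
  rw [orthonormal_iff_ite] at hx hy ⊢
  have hyx (i j) : inner ℝ (y i) (x j) = 0 := by rw [real_inner_comm, hxy]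
  intro i j
  calc inner ℝ (sumDiffFrame x y i) (sumDiffFrame x y j)
      = (√2)⁻¹ * (√2)⁻¹ * ((if pairIndex i = pairIndex j then (1 : ℝ) else 0) *
          (1 + paritySign i * paritySign j)) := by
        simp only [sumDiffFrame, real_inner_smul_left, real_inner_smul_right, inner_add_left,
          inner_add_right, hx, hy, hxy, hyx]
        ring
    _ = if i = j then 1 else 0 := by
        rw [ite_pairIndex_mul_one_add_paritySign_mul, ← mul_inv, Real.mul_self_sqrt zero_le_two,
          inv_mul_cancel_left₀ two_ne_zero]

lemma sumDiffFrame_neg (x y : Fin k → F) (i : Fin (2 * k)) :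
    sumDiffFrame x (-y) i = sumDiffFrame x y (finFlip i) := by
  simp [sumDiffFrame, pairIndex_finFlip, paritySign_finFlip]

end SumDiffFrame

section OddFrame

open Module Quaternion

/-- A nowhere zero map from the plane to the quaternions which is the inclusion `ℂ ⊂ ℍ` on the unit
circle: the `j`-component `1 - ‖z‖²` avoids the zero of the inclusion. -/
noncomputable def diskQuaternion (z : ℂ) : ℍ[ℝ] :=
  ⟨z.re, z.im, 1 - ‖z‖ ^ 2, 0⟩

lemma continuous_diskQuaternion : Continuous diskQuaternion := by
  have heq : diskQuaternion = fun z : ℂ =>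
      Quaternion.linearIsometryEquivTuple.symm !₂[z.re, z.im, 1 - ‖z‖ ^ 2, 0] := rfl
  rw [heq]
  exact Quaternion.linearIsometryEquivTuple.symm.continuous.comp (by fun_prop)

lemma diskQuaternion_ne_zero (z : ℂ) : diskQuaternion z ≠ 0 := by
  intro h
  have hz : z = 0 :=
    Complex.ext (congrArg QuaternionAlgebra.re h) (congrArg QuaternionAlgebra.imI h)
  simpa [diskQuaternion, hz] using congrArg QuaternionAlgebra.imJ h

lemma diskQuaternion_neg {z : ℂ} (hz : ‖z‖ = 1) : diskQuaternion (-z) = -diskQuaternion z := by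
  ext <;> simp only [re_neg, imI_neg, imJ_neg, imK_neg] <;> simp [diskQuaternion, hz]

lemma orthonormal_smul_of_norm_eq_one {A F ι : Type*} [NormedRing A] [NormedAddCommGroup F]
    [InnerProductSpace ℝ F] [Module A F] [NormSMulClass A F] [SMulCommClass A ℝ F] {a : A}
    (ha : ‖a‖ = 1) {b : ι → F} (hb : Orthonormal ℝ b) : Orthonormal ℝ (a • b) :=
  hb.comp_linearIsometry
    { toLinearMap := DistribSMul.toLinearMap ℝ F a
      norm_map' := fun v => by simp [norm_smul, ha] }

lemma exists_orthonormal_of_le_finrank {𝕜 F : Type*} [RCLike 𝕜] [NormedAddCommGroup F]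
    [InnerProductSpace 𝕜 F] [FiniteDimensional 𝕜 F] {k : ℕ} (hk : k ≤ finrank 𝕜 F) :
    ∃ v : Fin k → F, Orthonormal 𝕜 v :=
  ⟨_, (stdOrthonormalBasis 𝕜 F).orthonormal.comp _ (Fin.castLE_injective hk)⟩

lemma nonempty_linearIsometry_of_finrank_le {𝕜 F G : Type*} [RCLike 𝕜] [NormedAddCommGroup F]
    [InnerProductSpace 𝕜 F] [FiniteDimensional 𝕜 F] [NormedAddCommGroup G]
    [InnerProductSpace 𝕜 G] [FiniteDimensional 𝕜 G] (h : finrank 𝕜 F ≤ finrank 𝕜 G) :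
    Nonempty (F →ₗᵢ[𝕜] G) := by
  obtain ⟨v, hv⟩ := exists_orthonormal_of_le_finrank h
  let b := stdOrthonormalBasis 𝕜 F
  refine ⟨(b.toBasis.constr 𝕜 v).isometryOfOrthonormal (v := b.toBasis) (by simp) ?_⟩
  convert hv
  ext1 i
  exact b.toBasis.constr_basis 𝕜 v i

lemma finrank_piLp_quaternion (l : ℕ) : finrank ℝ (PiLp 2 fun _ : Fin l => ℍ[ℝ]) = 4 * l := by
  rw [(WithLp.linearEquiv 2 ℝ (Fin l → ℍ[ℝ])).finrank_eq, finrank_pi_fintype]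
  simp [Quaternion.finrank_eq_four, mul_comm]

lemma exists_orthonormal_odd_on_circle {k l : ℕ} (hkl : k ≤ 4 * l) :
    ∃ y : ℂ → Fin k → PiLp 2 fun _ : Fin l => ℍ[ℝ], Continuous y ∧ (∀ z, Orthonormal ℝ (y z)) ∧
      ∀ z, ‖z‖ = 1 → y (-z) = -y z := by
  obtain ⟨b, hb⟩ := exists_orthonormal_of_le_finrank (hkl.trans_eq (finrank_piLp_quaternion l).symm)
  have hq := continuous_diskQuaternion
  refine ⟨fun z => (‖diskQuaternion z‖⁻¹ • diskQuaternion z) • b, ?_, fun z => ?_, fun z hz => ?_⟩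
  · exact ((hq.norm.inv₀ fun z => norm_ne_zero_iff.mpr (diskQuaternion_ne_zero z)).smul hq).smul
      continuous_const
  · exact orthonormal_smul_of_norm_eq_one (norm_smul_inv_norm (diskQuaternion_ne_zero z)) hb
  · simp [diskQuaternion_neg hz]

lemma exists_frame_flip_odd_on_sphere {X F : Type*} [NormedAddCommGroup X] [NormedAddCommGroup F]
    [InnerProductSpace ℝ F] [FiniteDimensional ℝ F] {n k : ℕ} (hn : k + finrank ℝ F ≤ n)
    {y : X → Fin k → F} (hy : Continuous y) (horth : ∀ x, Orthonormal ℝ (y x))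
    (hodd : ∀ x, ‖x‖ = 1 → y (-x) = -y x) :
    ∃ Φ : X → Stiefel n (2 * k), Continuous Φ ∧ ∀ x, ‖x‖ = 1 → Φ (-x) = flipFrame (Φ x) := by
  have hdim : finrank ℝ (WithLp 2 (EuclideanSpace ℝ (Fin k) × F)) ≤
      finrank ℝ (EuclideanSpace ℝ (Fin n)) := by
    rw [(WithLp.linearEquiv 2 ℝ (EuclideanSpace ℝ (Fin k) × F)).finrank_eq, finrank_prod]
    simpa using hn
  obtain ⟨e⟩ := nonempty_linearIsometry_of_finrank_le hdim
  let u (i : Fin k) : WithLp 2 (EuclideanSpace ℝ (Fin k) × F) :=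
    WithLp.toLp 2 (EuclideanSpace.single i 1, 0)
  let w (x : X) (i : Fin k) : WithLp 2 (EuclideanSpace ℝ (Fin k) × F) := WithLp.toLp 2 (0, y x i)
  have hu : Orthonormal ℝ u := by
    simp [orthonormal_iff_ite, u, WithLp.prod_inner_apply, EuclideanSpace.inner_single_left]
  have hw (x : X) : Orthonormal ℝ (w x) := by
    simpa [orthonormal_iff_ite, w, WithLp.prod_inner_apply] using horth x
  have huw (x : X) (i j : Fin k) : inner ℝ (u i) (w x j) = 0 := by
    simp [u, w, WithLp.prod_inner_apply]
  have hwodd (x : X) (hx : ‖x‖ = 1) : w (-x) = -w x := by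
    ext1 i; simp [w, hodd x hx, ← WithLp.toLp_neg]
  refine ⟨fun x => ⟨e ∘ sumDiffFrame u (w x),
    (orthonormal_sumDiffFrame hu (hw x) (huw x)).comp_linearIsometry e⟩, ?_, fun x hx => ?_⟩
  · refine Continuous.subtype_mk (continuous_pi fun i => e.continuous.comp ?_) _
    simp only [sumDiffFrame, w]
    fun_prop
  · ext1; ext1 i
    simp [hwodd x hx, sumDiffFrame_neg, flipFrame]

end OddFrame

theorem no_flip_to_antipodal_map_on_SO_general {n k l m : ℕ} (hkl : k ≤ 4 * l)
    (hn : k + 4 * l ≤ n) (hm : Odd m) :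
    ¬ ∃ f : Stiefel n (2 * k) → Stiefel (2 * m + 1) (2 * m),
        Continuous f ∧ ∀ v, f (flipFrame v) = negFrame (f v) := by
  rintro ⟨f, hf, hequiv⟩
  obtain ⟨y, hy, horth, hyodd⟩ := exists_orthonormal_odd_on_circle hkl
  obtain ⟨Φ, hΦ, hΦodd⟩ := exists_frame_flip_odd_on_sphere (n := n)
    (by rwa [finrank_piLp_quaternion]) hy horth hyodd
  exact not_odd_on_sphere_stiefel (X := ℂ) (by simp) hm
    ⟨f ∘ Φ, hf.comp hΦ, fun z hz => by simp [hΦodd z hz, hequiv]⟩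

/-- For `n = 2^r − 1` (`r > 2`), writing `n − 1 = 2k`, there is no continuous
equivariant map `V_{n,n-1} → V_{n,n-1}` (i.e. `SO(n) → SO(n)`), where `C₂` acts by
the flip action on the source and antipodally on the target. -/
theorem no_flip_to_antipodal_map_on_SO (r : ℕ) (hr : 2 < r) (n k : ℕ)
    (hn : n = 2 ^ r - 1) (hk : n - 1 = 2 * k) :
    ¬ ∃ f : Stiefel n (2 * k) → Stiefel n (2 * k),
        Continuous f ∧ ∀ v, f (flipFrame v) = negFrame (f v) := by
  obtain ⟨q, rfl⟩ := Nat.exists_eq_add_of_lt hr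
  have hpow : 2 ^ (2 + q + 1) = 8 * 2 ^ q := by ring
  have hpos : 0 < 2 ^ q := by positivity
  obtain rfl : n = 2 * k + 1 := by omega
  exact no_flip_to_antipodal_map_on_SO_general (l := 2 ^ q) (by omega) (by omega)
    ⟨2 * 2 ^ q - 1, by omega⟩
end

section
/- For every integer n ≥ 6, N_F(n, 6) = n − 5 if n ≡ 1 or 2 (mod 4), N_F(n, 6) = n − 4 if n ≡ 0 (mod 4), and N_F(n, 6) = n − 3 if n ≡ 3 (mod 4). -/
/-- `N_F(n, 2k)`: the minimum `j` with `n - 2k < j ≤ n` such that `C(k + j - 1, j)` is odd.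
Here the second argument is `k` (so `NF n k` is the paper's `N_F(n, 2k)`). -/
noncomputable def NF (n k : ℕ) : ℕ :=
  sInf {j : ℕ | n - 2 * k < j ∧ j ≤ n ∧ Odd (Nat.choose (k + j - 1) j)}

/-!
By Lucas' theorem, `C(m + j, j)` is odd exactly when no carry occurs in adding `m` and `j` in
base two, that is, when `m` and `j` have no binary digit `1` in common. Hence `N_F(n, 2(m + 1))` is
the first such `j` above `n - 2(m + 1)`. For `m = 2` this asks that the second binary digit of `j`
be `0`, i.e. `j ≡ 0, 1 (mod 4)`, and among any three consecutive integers there is such a `j`.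
-/

theorem odd_choose_iff_mod_two_div_two (n k : ℕ) :
    Odd (n.choose k) ↔ Odd ((n % 2).choose (k % 2)) ∧ Odd ((n / 2).choose (k / 2)) := by
  have lucas := Choose.choose_modEq_choose_mod_mul_choose_div_nat (n := n) (k := k) (p := 2)
  rw [← Nat.odd_mul, Nat.odd_iff, Nat.odd_iff, lucas]

theorem land_eq_zero_iff_mod_two_div_two (m j : ℕ) :
    m &&& j = 0 ↔ ¬(m % 2 = 1 ∧ j % 2 = 1) ∧ m / 2 &&& j / 2 = 0 := by
  rw [← Nat.and_mod_two_eq_one, ← Nat.and_div_two]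
  omega

theorem odd_choose_add_iff_land_eq_zero (m j : ℕ) :
    Odd ((m + j).choose j) ↔ m &&& j = 0 := by
  induction m using Nat.strong_induction_on generalizing j with
  | _ m ih =>
    rcases Nat.eq_zero_or_pos m with rfl | hm
    · simp
    rw [odd_choose_iff_mod_two_div_two, land_eq_zero_iff_mod_two_div_two,
      ← ih (m / 2) (by omega) (j / 2)]
    by_cases carry : m % 2 = 1 ∧ j % 2 = 1
    · have sum_even : (m + j) % 2 = 0 := by omega
      simp [carry, sum_even]
    · have sum_div_two : (m + j) / 2 = m / 2 + j / 2 := by omega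
      have last_digits : ((m + j) % 2).choose (j % 2) = 1 := by
        rcases Nat.mod_two_eq_zero_or_one j with hj | hj
        · rw [hj, Nat.choose_zero_right]
        · rw [hj, show (m + j) % 2 = 1 by omega, Nat.choose_self]
      simp [carry, sum_div_two, last_digits]

theorem two_pow_land_eq_zero_iff (i j : ℕ) : 2 ^ i &&& j = 0 ↔ j / 2 ^ i % 2 = 0 := by
  simp [Nat.two_pow_and, Nat.testBit_eq_decide_div_mod_eq]

theorem NF_succ_eq_of_isLeast {n m a : ℕ}
    (ha : IsLeast {j | n - 2 * (m + 1) < j ∧ m &&& j = 0} a) (han : a ≤ n) :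
    NF n (m + 1) = a := by
  have top_index (j : ℕ) : m + 1 + j - 1 = m + j := by omega
  simp only [NF, top_index, odd_choose_add_iff_land_eq_zero]
  exact IsLeast.csInf_eq
    ⟨⟨ha.1.1, han, ha.1.2⟩, fun j ⟨lower, _, disjoint⟩ => ha.2 ⟨lower, disjoint⟩⟩

theorem NF_two_pow_add_one_eq_of_isLeast {n i a : ℕ}
    (ha : IsLeast {j | n - 2 * (2 ^ i + 1) < j ∧ j / 2 ^ i % 2 = 0} a) (han : a ≤ n) :
    NF n (2 ^ i + 1) = a :=
  NF_succ_eq_of_isLeast (by simpa only [two_pow_land_eq_zero_iff] using ha) han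

/-- For every integer `n ≥ 6`, `N_F(n, 6) = n - 5` if `n ≡ 1, 2 (mod 4)`,
`n - 4` if `n ≡ 0 (mod 4)`, and `n - 3` if `n ≡ 3 (mod 4)`. -/
theorem NF_six (n : ℕ) (hn : 6 ≤ n) :
    ((n % 4 = 1 ∨ n % 4 = 2) → NF n 3 = n - 5) ∧
    (n % 4 = 0 → NF n 3 = n - 4) ∧
    (n % 4 = 3 → NF n 3 = n - 3) := by
  have NF_eq {a : ℕ} (ha : IsLeast {j | n - 6 < j ∧ j / 2 % 2 = 0} a) (han : a ≤ n) :
      NF n 3 = a := NF_two_pow_add_one_eq_of_isLeast (i := 1) ha han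
  refine ⟨fun h => ?_, fun h => ?_, fun h => ?_⟩ <;>
    refine NF_eq ⟨⟨?_, ?_⟩, fun j ⟨lower, digit⟩ => ?_⟩ ?_ <;>
    omega
end

section
/- Let 1 < 2k ≤ n, and let n − k = Σ_i a_i 2^i and n − 2k + 1 = Σ_i b_i 2^i be the binary expansions (a_i, b_i ∈ {0,1}). If for every index i with b_i = 1 one also has a_i = 1, then N_F(n, 2k) = n − 2k + 1; otherwise N_F(n, 2k) > n − 2k + 1. -/
/-!
By Lucas' theorem modulo `2`, `C(n, k)` is odd exactly when the binary digits of `k` are dominated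
by those of `n`. At `j = n - 2k + 1`, the least admissible value, the coefficient `C(k + j - 1, j)`
is `C(n - k, n - 2k + 1)`, so the digit condition says whether the minimum is attained there.

That some `j` in the window works at all is seen by choosing a power `2 ^ m` with
`k ≤ 2 ^ m ≤ 2k`: the window has length `2k`, so it contains the multiple `j = 2 ^ m * (n / 2 ^ m)`,
and adding `k - 1 < 2 ^ m` to `j` causes no carries.
-/

theorem odd_choose_iff_mod_two_and_div_two (n k : ℕ) :
    Odd (n.choose k) ↔ (k % 2 = 1 → n % 2 = 1) ∧ Odd ((n / 2).choose (k / 2)) := by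
  have lucas : n.choose k % 2 = (n % 2).choose (k % 2) * (n / 2).choose (k / 2) % 2 :=
    Choose.choose_modEq_choose_mod_mul_choose_div_nat
  have odd_choose_mod_two : Odd ((n % 2).choose (k % 2)) ↔ (k % 2 = 1 → n % 2 = 1) := by
    rcases Nat.mod_two_eq_zero_or_one n with hn | hn <;>
      rcases Nat.mod_two_eq_zero_or_one k with hk | hk <;> simp [hn, hk]
  rw [Nat.odd_iff, lucas, ← Nat.odd_iff, Nat.odd_mul, odd_choose_mod_two]

theorem odd_choose_iff_testBit (n k : ℕ) :
    Odd (n.choose k) ↔ ∀ i, k.testBit i = true → n.testBit i = true := by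
  induction k using Nat.div2Induction generalizing n with
  | ind k ih =>
    rcases k.eq_zero_or_pos with rfl | hk
    · simp
    · rw [odd_choose_iff_mod_two_and_div_two, ih hk,
        ← Nat.and_forall_add_one (p := fun i => k.testBit i = true → n.testBit i = true)]
      simp only [Nat.testBit_zero, decide_eq_true_eq, Nat.testBit_div_two]

theorem odd_choose_two_pow_mul_add (a : ℕ) {b m : ℕ} (hb : b < 2 ^ m) :
    Odd ((2 ^ m * a + b).choose (2 ^ m * a)) := by
  rw [odd_choose_iff_testBit]
  intro i hi
  simp only [Nat.testBit_two_pow_mul, Bool.and_eq_true, decide_eq_true_eq] at hi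
  rw [Nat.testBit_two_pow_mul_add a hb, if_neg hi.1.not_gt]
  exact hi.2

theorem exists_two_pow_between_self_and_two_mul {k : ℕ} (hk : 0 < k) :
    ∃ m, k ≤ 2 ^ m ∧ 2 ^ m ≤ 2 * k := by
  refine ⟨Nat.log 2 (2 * k), ?_, Nat.pow_log_le_self 2 (by lia)⟩
  have : 2 * k < 2 ^ (Nat.log 2 (2 * k) + 1) := Nat.lt_pow_succ_log_self one_lt_two _
  lia

section NF

variable {n k : ℕ}

theorem exists_odd_choose_of_two_mul_le (hk : 0 < k) (hkn : 2 * k ≤ n) :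
    ∃ j, n - 2 * k < j ∧ j ≤ n ∧ Odd ((k + j - 1).choose j) := by
  obtain ⟨m, hkm, hmk⟩ := exists_two_pow_between_self_and_two_mul hk
  have lt_next_multiple : n < 2 ^ m * (n / 2 ^ m) + 2 ^ m :=
    Nat.lt_mul_div_succ n (Nat.two_pow_pos m)
  refine ⟨2 ^ m * (n / 2 ^ m), by lia, Nat.mul_div_le n _, ?_⟩
  rw [show k + 2 ^ m * (n / 2 ^ m) - 1 = 2 ^ m * (n / 2 ^ m) + (k - 1) by lia]
  exact odd_choose_two_pow_mul_add _ (by lia)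

theorem NF_spec (hk : 0 < k) (hkn : 2 * k ≤ n) :
    n - 2 * k < NF n k ∧ NF n k ≤ n ∧ Odd ((k + NF n k - 1).choose (NF n k)) :=
  Nat.sInf_mem (exists_odd_choose_of_two_mul_le hk hkn)

theorem NF_eq_iff_odd_choose (hk : 0 < k) (hkn : 2 * k ≤ n) :
    NF n k = n - 2 * k + 1 ↔ Odd ((n - k).choose (n - 2 * k + 1)) := by
  have top_eq : k + (n - 2 * k + 1) - 1 = n - k := by lia
  obtain ⟨lt_NF, -, odd_choose_NF⟩ := NF_spec hk hkn
  constructor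
  · intro h
    rwa [h, top_eq] at odd_choose_NF
  · intro h
    have NF_le : NF n k ≤ n - 2 * k + 1 := Nat.sInf_le ⟨by lia, by lia, by rwa [top_eq]⟩
    exact le_antisymm NF_le lt_NF

end NF

/-- Let `1 < 2k ≤ n`. If every binary digit `1` of `n - 2k + 1` is also a binary digit `1`
of `n - k`, then `N_F(n, 2k) = n - 2k + 1`; otherwise `N_F(n, 2k) > n - 2k + 1`. -/
theorem NF_min_value (n k : ℕ) (h1 : 1 < 2 * k) (h2 : 2 * k ≤ n) :
    ((∀ i, (n - 2 * k + 1).testBit i = true → (n - k).testBit i = true) →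
        NF n k = n - 2 * k + 1) ∧
    ((¬ ∀ i, (n - 2 * k + 1).testBit i = true → (n - k).testBit i = true) →
        NF n k > n - 2 * k + 1) := by
  have hk : 0 < k := by lia
  have lower_bound : n - 2 * k + 1 ≤ NF n k := (NF_spec hk h2).1
  rw [← odd_choose_iff_testBit, ← NF_eq_iff_odd_choose hk h2]
  exact ⟨id, fun hne => lower_bound.lt_of_ne' hne⟩
end

section
/- Let r > 0 and let k = 1 + Σ_{i=0}^{r-1} 2^i + Σ_{i=r+1}^{s} a_i 2^i with each a_i ∈ {0,1} (i.e., the binary expansion of k − 1 has digit 1 in every position 0, …, r−1 and digit 0 in position r). Then the binomial coefficient C(k + 2^r − 1, 2^r) is odd and C(k + j − 1, j) is even for every j with 1 ≤ j < 2^r; consequently, for every n with n − 2k < 2^r ≤ n, N_F(n, 2k) = 2^r. -/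
/-!
Write `k = 2 ^ r * q` with `q` odd. Since `j * C(k + j - 1, j)` is a multiple of `k`, an odd
`C(k + j - 1, j)` forces `2 ^ r ∣ j`, which excludes `0 < j < 2 ^ r`. At `j = 2 ^ r`, the number
`k + j - 1 = 2 ^ r * q + (2 ^ r - 1)` has quotient `q` by `2 ^ r`, so Lucas's theorem gives
`C(k + j - 1, j) ≡ C(q, 1) = q` modulo `2`. The same argument works for any prime.
-/

theorem dvd_mul_choose_add_sub_one (k j : ℕ) : k ∣ j * (k + j - 1).choose j := by
  cases j with
  | zero => simp
  | succ i =>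
    have absorption : (k + i).choose (i + 1) * (i + 1) = (k + i).choose i * k := by
      simpa only [Nat.add_sub_cancel] using Nat.choose_succ_right_eq (k + i) i
    rw [← add_assoc, Nat.add_sub_cancel, mul_comm, absorption]
    exact dvd_mul_left k _

section Prime

variable {p : ℕ} [Fact p.Prime] {r : ℕ}

theorem dvd_choose_add_sub_one_of_pow_dvd {k j : ℕ} (hk : p ^ r ∣ k) (hj : ¬p ^ r ∣ j) :
    p ∣ (k + j - 1).choose j := by
  by_contra h
  have coprime : (p ^ r).Coprime ((k + j - 1).choose j) :=
    ((Fact.out : p.Prime).coprime_iff_not_dvd.2 h).pow_left r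
  exact hj (coprime.dvd_of_dvd_mul_right (hk.trans (dvd_mul_choose_add_sub_one k j)))

theorem choose_pow_mul_add_pow_mul_modEq_choose {b : ℕ} (hb : b < p ^ r) (a c : ℕ) :
    (p ^ r * a + b).choose (p ^ r * c) ≡ a.choose c [MOD p] := by
  have hpr : 0 < p ^ r := Nat.zero_lt_of_lt hb
  have top_div : (p ^ r * a + b) / p ^ r = a := by
    rw [Nat.mul_add_div hpr, Nat.div_eq_of_lt hb, add_zero]
  have bottom_div : p ^ r * c / p ^ r = c := Nat.mul_div_cancel_left c hpr
  have bottom_digit : ∀ i ∈ Finset.range r, p ^ r * c / p ^ i % p = 0 := fun i hi ↦ by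
    have hir : i + 1 ≤ r := Finset.mem_range.1 hi
    refine Nat.mod_eq_zero_of_dvd (Nat.dvd_div_of_mul_dvd ?_)
    rw [← pow_succ]
    exact (pow_dvd_pow p hir).mul_right c
  have low_digits :
      ∏ i ∈ Finset.range r,
        ((p ^ r * a + b) / p ^ i % p).choose (p ^ r * c / p ^ i % p) = 1 :=
    Finset.prod_eq_one fun i hi ↦ by rw [bottom_digit i hi, Nat.choose_zero_right]
  have lucas := Choose.choose_modEq_choose_mul_prod_range_choose
    (n := p ^ r * a + b) (k := p ^ r * c) (p := p) r
  rw [low_digits, top_div, bottom_div, Nat.cast_one, mul_one] at lucas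
  exact Int.natCast_modEq_iff.1 lucas

theorem choose_pow_mul_add_pow_sub_one_modEq (q : ℕ) :
    (p ^ r * q + p ^ r - 1).choose (p ^ r) ≡ q [MOD p] := by
  have hpr : 0 < p ^ r := pow_pos (Fact.out : p.Prime).pos r
  have lucas := choose_pow_mul_add_pow_mul_modEq_choose (Nat.sub_one_lt hpr.ne') q 1
  rwa [mul_one, Nat.choose_one_right, ← Nat.add_sub_assoc hpr] at lucas

theorem isLeast_not_dvd_choose_pow_mul_add_sub_one {q : ℕ} (hq : ¬p ∣ q) :
    IsLeast {j | 0 < j ∧ ¬p ∣ (p ^ r * q + j - 1).choose j} (p ^ r) := by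
  refine ⟨⟨pow_pos (Fact.out : p.Prime).pos r, ?_⟩, ?_⟩
  · rwa [(choose_pow_mul_add_pow_sub_one_modEq q).dvd_iff dvd_rfl]
  · rintro j ⟨hj, hndvd⟩
    have pow_dvd : p ^ r ∣ j :=
      not_not.1 fun h ↦ hndvd (dvd_choose_add_sub_one_of_pow_dvd (dvd_mul_right _ q) h)
    exact Nat.le_of_dvd hj pow_dvd

end Prime

theorem isLeast_odd_choose_two_pow_mul_add_sub_one (r : ℕ) {q : ℕ} (hq : Odd q) :
    IsLeast {j | 0 < j ∧ Odd ((2 ^ r * q + j - 1).choose j)} (2 ^ r) := by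
  simpa only [Nat.two_dvd_ne_zero, ← Nat.odd_iff] using
    isLeast_not_dvd_choose_pow_mul_add_sub_one (p := 2) (r := r) hq.not_two_dvd_nat

theorem NF_eq_of_isLeast {n k m : ℕ}
    (hm : IsLeast {j | 0 < j ∧ Odd ((k + j - 1).choose j)} m)
    (hlt : n - 2 * k < m) (hle : m ≤ n) : NF n k = m :=
  IsLeast.csInf_eq
    ⟨⟨hlt, hle, hm.1.2⟩, fun _ ⟨hj, _, hodd⟩ ↦ hm.2 ⟨Nat.zero_lt_of_lt hj, hodd⟩⟩

theorem pow_dvd_sum_Icc_mul_pow {R : Type*} [CommSemiring R] (b : R) (a : ℕ → R) (m s : ℕ) :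
    b ^ m ∣ ∑ i ∈ Finset.Icc m s, a i * b ^ i :=
  Finset.dvd_sum fun _ hi ↦ (pow_dvd_pow b (Finset.mem_Icc.1 hi).1).mul_left _

theorem one_add_sum_range_two_pow {R : Type*} [Semiring R] (r : ℕ) :
    1 + ∑ i ∈ Finset.range r, (2 : R) ^ i = 2 ^ r := by
  simpa only [one_add_one_eq_two, mul_one, add_comm] using geom_sum_mul_add (1 : R) r

theorem exists_odd_two_pow_mul_eq_sum (r s : ℕ) (a : ℕ → ℕ) :
    ∃ q, Odd q ∧ 1 + (∑ i ∈ Finset.range r, 2 ^ i) +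
      ∑ i ∈ Finset.Icc (r + 1) s, a i * 2 ^ i = 2 ^ r * q := by
  obtain ⟨m, hm⟩ := pow_dvd_sum_Icc_mul_pow 2 a (r + 1) s
  refine ⟨2 * m + 1, odd_two_mul_add_one m, ?_⟩
  rw [one_add_sum_range_two_pow, hm]
  ring

/-- Let `r > 0` and `k = 1 + ∑_{i=0}^{r-1} 2^i + ∑_{i=r+1}^{s} a_i 2^i` with each
`a_i ∈ {0, 1}`. Then `C(k + 2^r - 1, 2^r)` is odd, `C(k + j - 1, j)` is even for
`1 ≤ j < 2^r`, and for every `n` with `n - 2k < 2^r ≤ n` one has `N_F(n, 2k) = 2^r`. -/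
theorem NF_power_of_two (r s : ℕ) (hr : 0 < r) (a : ℕ → ℕ)
    (ha : ∀ i, a i = 0 ∨ a i = 1) (k : ℕ)
    (hk : k = 1 + (∑ i ∈ Finset.range r, 2 ^ i) +
        ∑ i ∈ Finset.Icc (r + 1) s, a i * 2 ^ i) :
    Odd (Nat.choose (k + 2 ^ r - 1) (2 ^ r)) ∧
    (∀ j, 1 ≤ j → j < 2 ^ r → Even (Nat.choose (k + j - 1) j)) ∧
    (∀ n : ℕ, n - 2 * k < 2 ^ r → 2 ^ r ≤ n → NF n k = 2 ^ r) := by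
  obtain ⟨q, hq, hsum⟩ := exists_odd_two_pow_mul_eq_sum r s a
  obtain rfl : k = 2 ^ r * q := hk.trans hsum
  have least := isLeast_odd_choose_two_pow_mul_add_sub_one r hq
  refine ⟨least.1.2, fun j hj hjr ↦ ?_, fun n ↦ NF_eq_of_isLeast least⟩
  exact Nat.not_odd_iff_even.1 fun hodd ↦ hjr.not_ge (least.2 ⟨hj, hodd⟩)
end
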